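/- arXiv:1501.05888 — 5 statements merged into one kernel-verified Lean document; each statement's English description precedes it below -/
import Mathlib

section
/- Let (t_k)_{k ∈ ℤ} be a strictly increasing sequence of real numbers, let ε > ε₁ > 0, let ω be a real number and let p ∈ ℤ be such that |t_{j+p} - t_j - ω| < ε₁ for every j ∈ ℤ. If k ∈ ℤ and t ∈ ℝ satisfy |t - t_i| > ε for all i ∈ ℤ and t_{k-1} < t < t_k, then t_{k+p-1} < t + ω < t_{k+p}. -/
section OrderedGroup

variable {G : Type*} [AddCommGroup G] [LinearOrder G] [IsOrderedAddMonoid G] {a b x ω : G}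

theorem lt_add_of_abs_sub_sub_lt_abs_sub (h : |b - a - ω| < |x - a|) (hax : a < x) :
    b < x + ω := by
  have hlt : b - a - ω < x - a := calc
    b - a - ω ≤ |b - a - ω| := le_abs_self _
    _ < |x - a| := h
    _ = x - a := abs_of_pos (sub_pos.2 hax)
  rwa [sub_right_comm, sub_lt_sub_iff_right, sub_lt_iff_lt_add] at hlt

theorem add_lt_of_abs_sub_sub_lt_abs_sub (h : |b - a - ω| < |x - a|) (hxa : x < a) :
    x + ω < b := by
  have hlt : x - a < b - a - ω := calc
    x - a = -|x - a| := by rw [abs_of_neg (sub_neg.2 hxa), neg_neg]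
    _ < -|b - a - ω| := neg_lt_neg h
    _ ≤ b - a - ω := neg_abs_le _
  rwa [sub_right_comm, sub_lt_sub_iff_right, lt_sub_iff_add_lt] at hlt

theorem shifted_point_between_impulses_general {ι : Type*} [Add ι] {t : ι → G} {p : ι}
    (h : ∀ j, |t (j + p) - t j - ω| < |x - t j|) {i k : ι} (hi : t i < x) (hk : x < t k) :
    t (i + p) < x + ω ∧ x + ω < t (k + p) :=
  ⟨lt_add_of_abs_sub_sub_lt_abs_sub (h i) hi, add_lt_of_abs_sub_sub_lt_abs_sub (h k) hk⟩

end OrderedGroup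

/-- Lemma 2.3: if `ω` is an `ε₁`-almost period of the difference sequences of the
impulse points `t_k` (i.e. `|t_{j+p} - t_j - ω| < ε₁` for all `j`), `|t - t_i| > ε > ε₁`
for all `i`, and `t_{k-1} < t < t_k`, then `t_{k+p-1} < t + ω < t_{k+p}`. -/
theorem shifted_point_between_impulses
    (t : ℤ → ℝ) (ht : StrictMono t) (ε ε₁ : ℝ) (hε₁ : 0 < ε₁) (hεε₁ : ε₁ < ε)
    (ω : ℝ) (p : ℤ) (hap : ∀ j : ℤ, |t (j + p) - t j - ω| < ε₁)
    (k : ℤ) (x : ℝ) (hx : ∀ i : ℤ, ε < |x - t i|)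
    (hk1 : t (k - 1) < x) (hk2 : x < t k) :
    t (k + p - 1) < x + ω ∧ x + ω < t (k + p) := by
  rw [← sub_add_eq_add_sub k 1 p]
  exact shifted_point_between_impulses_general
    (fun j ↦ (hap j).trans (hεε₁.trans (hx j))) hk1 hk2
end

section
/- Let (γ_k)_{k ∈ ℤ} be a real sequence and let γ_L, Γ_M be constants such that γ_L > -1, γ_k ≥ γ_L for all k ∈ ℤ, and ∏_{i=q}^{p} (1+γ_i) ≤ Γ_M for all integers q ≤ p. Let ε ≥ 0 and let p ∈ ℤ satisfy |γ_{i+p} - γ_i| ≤ ε for all i ∈ ℤ. Then for all integers n ≤ k, | ∏_{i=n+p}^{k+p} (1+γ_i) - ∏_{i=n}^{k} (1+γ_i) | ≤ (Γ_M/(1+γ_L)) (k - n + 1) ε. -/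
/-! Telescoping the difference of the two products would produce mixed products, partly of the
shifted and partly of the original factors, on which there is no assumed bound. Logarithms avoid
them: for positive factors, `1 - 1 / x ≤ log x ≤ x - 1`, applied on the left to `∏ aᵢ / bᵢ` and on
the right to each `aᵢ / bᵢ`, gives `∏ aᵢ - ∏ bᵢ ≤ (∏ aᵢ) * ∑ (aᵢ - bᵢ) / bᵢ`. -/

section FinsetProducts

variable {ι : Type*} {s : Finset ι} {a b : ι → ℝ} {c M : ℝ}

theorem one_sub_inv_prod_le_sum_sub_one {x : ι → ℝ} (hx : ∀ i ∈ s, 0 < x i) :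
    1 - (∏ i ∈ s, x i)⁻¹ ≤ ∑ i ∈ s, (x i - 1) :=
  calc 1 - (∏ i ∈ s, x i)⁻¹
      ≤ Real.log (∏ i ∈ s, x i) := Real.one_sub_inv_le_log_of_pos (Finset.prod_pos hx)
    _ = ∑ i ∈ s, Real.log (x i) := Real.log_prod fun i hi => (hx i hi).ne'
    _ ≤ ∑ i ∈ s, (x i - 1) :=
      Finset.sum_le_sum fun i hi => Real.log_le_sub_one_of_pos (hx i hi)

theorem prod_sub_prod_le_prod_mul_sum_sub_div (ha : ∀ i ∈ s, 0 < a i) (hb : ∀ i ∈ s, 0 < b i) :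
    ∏ i ∈ s, a i - ∏ i ∈ s, b i ≤ (∏ i ∈ s, a i) * ∑ i ∈ s, (a i - b i) / b i := by
  have hprod : 0 < ∏ i ∈ s, a i := Finset.prod_pos ha
  calc ∏ i ∈ s, a i - ∏ i ∈ s, b i
      = (∏ i ∈ s, a i) * (1 - (∏ i ∈ s, a i / b i)⁻¹) := by
        rw [Finset.prod_div_distrib, inv_div, mul_sub, mul_one, mul_div_cancel₀ _ hprod.ne']
    _ ≤ (∏ i ∈ s, a i) * ∑ i ∈ s, (a i / b i - 1) :=
        mul_le_mul_of_nonneg_left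
          (one_sub_inv_prod_le_sum_sub_one fun i hi => div_pos (ha i hi) (hb i hi)) hprod.le
    _ = (∏ i ∈ s, a i) * ∑ i ∈ s, (a i - b i) / b i := by
        congr 1
        exact Finset.sum_congr rfl fun i hi => div_sub_one (hb i hi).ne'

theorem prod_sub_prod_le_div_mul_sum_abs_sub (hc : 0 < c) (ha : ∀ i ∈ s, 0 < a i)
    (hb : ∀ i ∈ s, c ≤ b i) (hM : ∏ i ∈ s, a i ≤ M) :
    ∏ i ∈ s, a i - ∏ i ∈ s, b i ≤ M / c * ∑ i ∈ s, |a i - b i| := by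
  have hprod : 0 ≤ ∏ i ∈ s, a i := Finset.prod_nonneg fun i hi => (ha i hi).le
  have hterm : ∀ i ∈ s, (a i - b i) / b i ≤ |a i - b i| / c := fun i hi =>
    div_le_div₀ (abs_nonneg _) (le_abs_self _) hc (hb i hi)
  calc ∏ i ∈ s, a i - ∏ i ∈ s, b i
      ≤ (∏ i ∈ s, a i) * ∑ i ∈ s, (a i - b i) / b i :=
        prod_sub_prod_le_prod_mul_sum_sub_div ha fun i hi => hc.trans_le (hb i hi)
    _ ≤ (∏ i ∈ s, a i) * ∑ i ∈ s, |a i - b i| / c :=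
        mul_le_mul_of_nonneg_left (Finset.sum_le_sum hterm) hprod
    _ ≤ M * ∑ i ∈ s, |a i - b i| / c := by gcongr
    _ = M / c * ∑ i ∈ s, |a i - b i| := by rw [← Finset.sum_div, div_mul_eq_mul_div, mul_div_assoc]

theorem abs_prod_sub_prod_le_div_mul_sum_abs_sub (hc : 0 < c) (ha : ∀ i ∈ s, c ≤ a i)
    (hb : ∀ i ∈ s, c ≤ b i) (haM : ∏ i ∈ s, a i ≤ M) (hbM : ∏ i ∈ s, b i ≤ M) :
    |∏ i ∈ s, a i - ∏ i ∈ s, b i| ≤ M / c * ∑ i ∈ s, |a i - b i| := by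
  refine abs_sub_le_iff.mpr ⟨?_, ?_⟩
  · exact prod_sub_prod_le_div_mul_sum_abs_sub hc (fun i hi => hc.trans_le (ha i hi)) hb haM
  · simpa only [abs_sub_comm] using
      prod_sub_prod_le_div_mul_sum_abs_sub hc (fun i hi => hc.trans_le (hb i hi)) ha hbM

end FinsetProducts

theorem prod_Icc_add_right {ι R : Type*} [AddCommMonoid ι] [PartialOrder ι]
    [IsOrderedCancelAddMonoid ι] [ExistsAddOfLE ι] [LocallyFiniteOrder ι] [CommMonoid R]
    (f : ι → R) (m n p : ι) :
    ∏ i ∈ Finset.Icc (m + p) (n + p), f i = ∏ i ∈ Finset.Icc m n, f (i + p) := by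
  simp only [← Finset.map_add_right_Icc, Finset.prod_map, addRightEmbedding_apply]

theorem shifted_product_estimate_general {ι : Type*} [AddCommMonoid ι] [PartialOrder ι]
    [IsOrderedCancelAddMonoid ι] [ExistsAddOfLE ι] [LocallyFiniteOrder ι]
    {γ : ι → ℝ} {γL ΓM ε : ℝ} {n k p : ι} (hγL : -1 < γL)
    (hγ : ∀ i ∈ Finset.Icc n k, γL ≤ γ i) (hγp : ∀ i ∈ Finset.Icc n k, γL ≤ γ (i + p))
    (hΓ : ∏ i ∈ Finset.Icc n k, (1 + γ i) ≤ ΓM)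
    (hΓp : ∏ i ∈ Finset.Icc (n + p) (k + p), (1 + γ i) ≤ ΓM)
    (hε : ∀ i ∈ Finset.Icc n k, |γ (i + p) - γ i| ≤ ε) :
    |∏ i ∈ Finset.Icc (n + p) (k + p), (1 + γ i) - ∏ i ∈ Finset.Icc n k, (1 + γ i)|
      ≤ ΓM / (1 + γL) * (Finset.Icc n k).card * ε := by
  have hL : 0 < 1 + γL := by linarith
  have hΓM : 0 ≤ ΓM :=
    (Finset.prod_nonneg fun i hi => hL.le.trans (by linarith [hγ i hi])).trans hΓ
  rw [prod_Icc_add_right] at hΓp ⊢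
  calc |∏ i ∈ Finset.Icc n k, (1 + γ (i + p)) - ∏ i ∈ Finset.Icc n k, (1 + γ i)|
      ≤ ΓM / (1 + γL) * ∑ i ∈ Finset.Icc n k, |1 + γ (i + p) - (1 + γ i)| :=
        abs_prod_sub_prod_le_div_mul_sum_abs_sub hL (fun i hi => by linarith [hγp i hi])
          (fun i hi => by linarith [hγ i hi]) hΓp hΓ
    _ = ΓM / (1 + γL) * ∑ i ∈ Finset.Icc n k, |γ (i + p) - γ i| := by
        simp only [add_sub_add_left_eq_sub]
    _ ≤ ΓM / (1 + γL) * ((Finset.Icc n k).card • ε) :=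
        mul_le_mul_of_nonneg_left (Finset.sum_le_card_nsmul _ _ _ hε) (div_nonneg hΓM hL.le)
    _ = ΓM / (1 + γL) * (Finset.Icc n k).card * ε := by rw [nsmul_eq_mul, mul_assoc]

/-- Lemma 2.4: if `γ_L > -1`, `γ_k ≥ γ_L` for all `k`, all products
`Γ(q,p) = ∏_{i=q}^p (1+γ_i)` are bounded above by `Γ_M`, and
`|γ_{i+p} - γ_i| ≤ ε` for all `i`, then for all integers `n ≤ k`,
`|Γ(n+p, k+p) - Γ(n,k)| ≤ (Γ_M/(1+γ_L)) (k-n+1) ε`. -/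
theorem shifted_product_estimate
    (γ : ℤ → ℝ) (γL ΓM : ℝ) (hγL : -1 < γL) (hγ : ∀ k : ℤ, γL ≤ γ k)
    (hΓM : ∀ q p : ℤ, q ≤ p → ∏ i ∈ Finset.Icc q p, (1 + γ i) ≤ ΓM)
    (ε : ℝ) (hε : 0 ≤ ε) (p : ℤ) (hap : ∀ i : ℤ, |γ (i + p) - γ i| ≤ ε) :
    ∀ n k : ℤ, n ≤ k →
      |∏ i ∈ Finset.Icc (n + p) (k + p), (1 + γ i) - ∏ i ∈ Finset.Icc n k, (1 + γ i)|
        ≤ ΓM / (1 + γL) * ((k - n + 1 : ℤ) : ℝ) * ε := by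
  intro n k hnk
  have hcard : ((k - n + 1 : ℤ) : ℝ) = (Finset.Icc n k).card := by
    rw [← Int.cast_natCast, Int.card_Icc_of_le n k (by lia), sub_add_eq_add_sub]
  rw [hcard]
  exact shifted_product_estimate_general hγL (fun i _ => hγ i) (fun i _ => hγ (i + p))
    (hΓM n k hnk) (hΓM (n + p) (k + p) (by gcongr)) fun i _ => hap i
end

section
/- Let (t_k)_{k ∈ ℤ} be a strictly increasing real sequence with t_{k+1} - t_k ≥ η for all k ∈ ℤ, where η > 0. Then for every α > 0, every ε with 0 < ε < η/2, and every t ∈ ℝ, Σ_{k : t_k < t} ∫_{t_k - ε}^{t_k + ε} e^{-α(t-s)} ds ≤ 2 e^{αη/2} ε/(1 - e^{-αη}). -/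
/-! Since the points `t i < x` are `η`-separated, `i ↦ ⌊(x - t i) / η⌋₊` is injective. Replacing
each distance `x - t i` by the smaller `⌊(x - t i) / η⌋₊ * η` therefore bounds a sum of a decreasing
function of these distances by the same sum over the multiples of `η`, which for the exponential is
geometric. -/

section Separated

variable {ι : Type*} {η : ℝ} {u : ι → ℝ} {f : ℝ → ℝ}

theorem injective_floor_div_of_separated (hη : 0 < η) (hu : ∀ i, 0 ≤ u i)
    (hsep : Pairwise fun i j => η ≤ |u i - u j|) :
    Function.Injective fun i => ⌊u i / η⌋₊ := by
  intro i j hij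
  have hfloor : ⌊u i / η⌋ = ⌊u j / η⌋ := by
    rw [← Int.natCast_floor_eq_floor (div_nonneg (hu i) hη.le),
      ← Int.natCast_floor_eq_floor (div_nonneg (hu j) hη.le)]
    exact congrArg Nat.cast hij
  have hclose : |u i - u j| < η := by
    have h := Int.abs_sub_lt_one_of_floor_eq_floor hfloor
    rwa [← sub_div, abs_div, abs_of_pos hη, div_lt_one hη] at h
  exact hsep.eq (not_le.mpr hclose)

theorem apply_le_apply_floor_div_mul (hf : AntitoneOn f (Set.Ici 0)) (hη : 0 < η)
    {y : ℝ} (hy : 0 ≤ y) : f y ≤ f (⌊y / η⌋₊ * η) :=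
  hf (Set.mem_Ici.mpr (by positivity)) hy
    ((le_div_iff₀ hη).mp (Nat.floor_le (div_nonneg hy hη.le)))

theorem summable_comp_of_separated (hη : 0 < η) (hu : ∀ i, 0 ≤ u i)
    (hsep : Pairwise fun i j => η ≤ |u i - u j|) (hf : AntitoneOn f (Set.Ici 0))
    (hf₀ : ∀ y, 0 ≤ y → 0 ≤ f y) (hsum : Summable fun n : ℕ => f (n * η)) :
    Summable fun i => f (u i) :=
  .of_nonneg_of_le (fun i => hf₀ _ (hu i))
    (fun i => apply_le_apply_floor_div_mul hf hη (hu i))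
    (hsum.comp_injective (injective_floor_div_of_separated hη hu hsep))

theorem tsum_comp_le_tsum_nat_mul_of_separated (hη : 0 < η) (hu : ∀ i, 0 ≤ u i)
    (hsep : Pairwise fun i j => η ≤ |u i - u j|) (hf : AntitoneOn f (Set.Ici 0))
    (hf₀ : ∀ y, 0 ≤ y → 0 ≤ f y) (hsum : Summable fun n : ℕ => f (n * η)) :
    ∑' i, f (u i) ≤ ∑' n : ℕ, f (n * η) :=
  (summable_comp_of_separated hη hu hsep hf hf₀ hsum).tsum_le_tsum_of_inj _
    (injective_floor_div_of_separated hη hu hsep) (fun _ _ => hf₀ _ (by positivity))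
    (fun i => apply_le_apply_floor_div_mul hf hη (hu i)) hsum

end Separated

section Exponential

open Real

variable {α η ε : ℝ}

theorem antitone_exp_neg_mul (hα : 0 ≤ α) : Antitone fun y => exp (-α * y) :=
  exp_monotone.comp_antitone (antitone_mul_left (neg_nonpos.mpr hα))

theorem hasSum_exp_neg_mul_nat_mul (hαη : 0 < α * η) :
    HasSum (fun n : ℕ => exp (-α * (n * η))) (1 - exp (-α * η))⁻¹ := by
  have hlt : exp (-α * η) < 1 := exp_lt_one_iff.mpr (by linarith)
  convert hasSum_geometric_of_lt_one (exp_pos _).le hlt using 2 with n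
  rw [← exp_nat_mul]
  ring_nf

theorem integral_exp_neg_mul_sub_le (hα : 0 ≤ α) (hε : 0 ≤ ε) (c x : ℝ) :
    ∫ s in (c - ε)..(c + ε), exp (-α * (x - s)) ≤
      2 * exp (α * ε) * ε * exp (-α * (x - c)) := by
  calc ∫ s in (c - ε)..(c + ε), exp (-α * (x - s))
      ≤ ∫ _ in (c - ε)..(c + ε), exp (-α * (x - (c + ε))) := by
        refine intervalIntegral.integral_mono_on (by linarith)
          (Continuous.intervalIntegrable (by fun_prop) _ _) intervalIntegrable_const
          fun s hs => antitone_exp_neg_mul hα (sub_le_sub_left hs.2 x)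
    _ = 2 * ε * exp (α * ε + -α * (x - c)) := by
        rw [intervalIntegral.integral_const, smul_eq_mul]
        ring_nf
    _ = 2 * exp (α * ε) * ε * exp (-α * (x - c)) := by
        rw [exp_add]
        ring

theorem exp_integral_sum_over_impulses_le_general {ι : Type*} {t : ι → ℝ} (hη : 0 < η)
    (hsep : Pairwise fun i j => η ≤ |t i - t j|) (hα : 0 < α) (hε : 0 ≤ ε) (x : ℝ) :
    Summable (fun i : {i // t i < x} => ∫ s in (t i - ε)..(t i + ε), exp (-α * (x - s))) ∧
    ∑' i : {i // t i < x}, ∫ s in (t i - ε)..(t i + ε), exp (-α * (x - s))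
      ≤ 2 * exp (α * ε) * ε / (1 - exp (-α * η)) := by
  have hdist : ∀ i : {i // t i < x}, 0 ≤ x - t i := fun i => sub_nonneg.mpr i.2.le
  have hdist_sep : Pairwise fun i j : {i // t i < x} => η ≤ |(x - t i) - (x - t j)| := by
    intro i j hij
    rw [sub_sub_sub_cancel_left]
    exact hsep (Subtype.coe_ne_coe.mpr hij.symm)
  have hanti : AntitoneOn (fun y => exp (-α * y)) (Set.Ici 0) :=
    (antitone_exp_neg_mul hα.le).antitoneOn _
  have hexp : ∀ y : ℝ, 0 ≤ y → 0 ≤ exp (-α * y) := fun y _ => (exp_pos _).le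
  have hgeom := hasSum_exp_neg_mul_nat_mul (mul_pos hα hη)
  have hsum := (summable_comp_of_separated hη hdist hdist_sep hanti hexp hgeom.summable).mul_left
    (2 * exp (α * ε) * ε)
  have hle := fun i : {i // t i < x} => integral_exp_neg_mul_sub_le hα.le hε (t i) x
  have hint := Summable.of_nonneg_of_le (fun i : {i // t i < x} =>
    intervalIntegral.integral_nonneg (by linarith) fun s _ => (exp_pos (-α * (x - s))).le) hle hsum
  refine ⟨hint, (hint.tsum_le_tsum hle hsum).trans ?_⟩
  rw [tsum_mul_left, div_eq_mul_inv, ← hgeom.tsum_eq]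
  gcongr
  exact tsum_comp_le_tsum_nat_mul_of_separated hη hdist hdist_sep hanti hexp hgeom.summable

end Exponential

theorem pairwise_le_abs_sub_of_monotone_of_gap {t : ℤ → ℝ} {η : ℝ} (ht : Monotone t)
    (hgap : ∀ k, η ≤ t (k + 1) - t k) : Pairwise fun i j => η ≤ |t i - t j| := by
  have hlt : ∀ i j, i < j → η ≤ |t i - t j| := fun i j hij => by
    rw [abs_sub_comm]
    exact (hgap i).trans ((sub_le_sub_right (ht hij) _).trans (le_abs_self _))
  intro i j hij
  rcases hij.lt_or_gt with h | h
  · exact hlt i j h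
  · exact abs_sub_comm (t i) (t j) ▸ hlt j i h

/-- Lemma 2.5, second inequality: if the impulse points `t_k` (k ∈ ℤ) are strictly
increasing with gaps at least `η > 0`, then for every `α > 0`, `0 < ε < η/2` and `t ∈ ℝ`,
`Σ_{t_k < t} ∫_{t_k-ε}^{t_k+ε} e^{-α(t-s)} ds ≤ 2 e^{αη/2} ε/(1 - e^{-αη})`. -/
theorem exp_integral_sum_over_impulses_le
    (t : ℤ → ℝ) (ht : StrictMono t) (η : ℝ) (hη : 0 < η)
    (hgap : ∀ k : ℤ, η ≤ t (k + 1) - t k) (α : ℝ) (hα : 0 < α)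
    (ε : ℝ) (hε : 0 < ε) (hεη : ε < η / 2) (x : ℝ) :
    Summable (fun k : {k : ℤ // t k < x} =>
      ∫ s in (t k - ε)..(t k + ε), Real.exp (-α * (x - s))) ∧
    ∑' k : {k : ℤ // t k < x}, ∫ s in (t k - ε)..(t k + ε), Real.exp (-α * (x - s))
      ≤ 2 * Real.exp (α * η / 2) * ε / (1 - Real.exp (-α * η)) := by
  have hsep := pairwise_le_abs_sub_of_monotone_of_gap ht.monotone hgap
  have hden : 0 ≤ 1 - Real.exp (-α * η) := sub_nonneg.mpr (Real.exp_le_one_iff.mpr (by nlinarith))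
  refine (exp_integral_sum_over_impulses_le_general hη hsep hα hε.le x).imp_right
    fun hle => hle.trans ?_
  rw [mul_div_assoc α]
  gcongr
end

section
/- Let a : ℝ → ℝ be continuous with a(r) ≥ a_L > 0 for all r ∈ ℝ, let ω ∈ ℝ and ε > 0 satisfy |a(r + ω) - a(r)| ≤ ε for all r ∈ ℝ. Then for all real numbers s ≤ t, | exp(-∫_s^t a(r+ω) dr) - exp(-∫_s^t a(r) dr) | ≤ (2/a_L) ε e^{-a_L (t-s)/2}. -/
/-!
The integrals of two functions bounded below by `c` are at least `c (t - s)`, so the mean value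
theorem for `exp` bounds the difference of the two exponentials by `e^{-c(t-s)} ε (t - s)`. Half of
the exponential decay absorbs the factor `t - s`, because `x e^{-x} ≤ 1`.
-/

open MeasureTheory Set

theorem abs_exp_sub_exp_le {u v M : ℝ} (hu : u ≤ M) (hv : v ≤ M) :
    |Real.exp u - Real.exp v| ≤ Real.exp M * |u - v| := by
  refine (convex_Iic M).norm_image_sub_le_of_norm_deriv_le
    (fun x _ ↦ Real.differentiableAt_exp) (fun x hx ↦ ?_) hv hu
  rw [Real.deriv_exp, Real.norm_eq_abs, Real.abs_exp]
  exact Real.exp_le_exp.mpr hx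

theorem exp_neg_mul_mul_le {c : ℝ} (hc : 0 < c) (x : ℝ) :
    Real.exp (-(c * x)) * x ≤ 2 / c * Real.exp (-c * x / 2) := by
  have half_decay : c * x / 2 * Real.exp (-(c * x / 2)) ≤ 1 :=
    (Real.mul_exp_neg_le_exp_neg_one _).trans (Real.exp_le_one_iff.mpr (by norm_num))
  calc Real.exp (-(c * x)) * x
      = Real.exp (-c * x / 2) * Real.exp (-(c * x / 2)) * x := by
        rw [← Real.exp_add]; ring_nf
    _ = 2 / c * Real.exp (-c * x / 2) * (c * x / 2 * Real.exp (-(c * x / 2))) := by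
        field_simp
    _ ≤ 2 / c * Real.exp (-c * x / 2) := mul_le_of_le_one_right (by positivity) half_decay

theorem mul_sub_le_intervalIntegral {f : ℝ → ℝ} {c s t : ℝ} (hst : s ≤ t)
    (hf : IntervalIntegrable f volume s t) (hcf : ∀ r ∈ Icc s t, c ≤ f r) :
    c * (t - s) ≤ ∫ r in s..t, f r := by
  simpa [mul_comm] using
    intervalIntegral.integral_mono_on hst intervalIntegrable_const hf hcf

theorem norm_intervalIntegral_sub_le {E : Type*} [NormedAddCommGroup E] [NormedSpace ℝ E]
    {f g : ℝ → E} {s t ε : ℝ} (hf : IntervalIntegrable f volume s t)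
    (hg : IntervalIntegrable g volume s t) (hfg : ∀ r ∈ uIoc s t, ‖f r - g r‖ ≤ ε) :
    ‖(∫ r in s..t, f r) - ∫ r in s..t, g r‖ ≤ ε * |t - s| := by
  rw [← intervalIntegral.integral_sub hf hg]
  exact intervalIntegral.norm_integral_le_of_norm_le_const hfg

theorem abs_exp_neg_integral_sub_le {f g : ℝ → ℝ} {c s t ε : ℝ} (hst : s ≤ t)
    (hf : IntervalIntegrable f volume s t) (hg : IntervalIntegrable g volume s t)
    (hcf : ∀ r ∈ Icc s t, c ≤ f r) (hcg : ∀ r ∈ Icc s t, c ≤ g r)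
    (hfg : ∀ r ∈ Icc s t, |f r - g r| ≤ ε) :
    |Real.exp (-∫ r in s..t, f r) - Real.exp (-∫ r in s..t, g r)|
      ≤ Real.exp (-(c * (t - s))) * (ε * (t - s)) := by
  have integral_close : |(∫ r in s..t, f r) - ∫ r in s..t, g r| ≤ ε * (t - s) := by
    have hfg' : ∀ r ∈ uIoc s t, ‖f r - g r‖ ≤ ε := fun r hr ↦
      hfg r (Ioc_subset_Icc_self (uIoc_of_le hst ▸ hr))
    simpa only [Real.norm_eq_abs, abs_of_nonneg (sub_nonneg.mpr hst)] using
      norm_intervalIntegral_sub_le hf hg hfg'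
  calc |Real.exp (-∫ r in s..t, f r) - Real.exp (-∫ r in s..t, g r)|
      ≤ Real.exp (-(c * (t - s))) * |(-∫ r in s..t, f r) - -∫ r in s..t, g r| :=
        abs_exp_sub_exp_le (neg_le_neg (mul_sub_le_intervalIntegral hst hf hcf))
          (neg_le_neg (mul_sub_le_intervalIntegral hst hg hcg))
    _ ≤ Real.exp (-(c * (t - s))) * (ε * (t - s)) := by
        rw [neg_sub_neg, abs_sub_comm]
        gcongr

theorem exp_integral_shift_estimate_general {f g : ℝ → ℝ} {c s t ε : ℝ} (hc : 0 < c)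
    (hst : s ≤ t) (hf : IntervalIntegrable f volume s t) (hg : IntervalIntegrable g volume s t)
    (hcf : ∀ r ∈ Icc s t, c ≤ f r) (hcg : ∀ r ∈ Icc s t, c ≤ g r)
    (hfg : ∀ r ∈ Icc s t, |f r - g r| ≤ ε) :
    |Real.exp (-∫ r in s..t, f r) - Real.exp (-∫ r in s..t, g r)|
      ≤ 2 / c * ε * Real.exp (-c * (t - s) / 2) := by
  have hε : 0 ≤ ε := (abs_nonneg _).trans (hfg s (left_mem_Icc.mpr hst))
  calc |Real.exp (-∫ r in s..t, f r) - Real.exp (-∫ r in s..t, g r)|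
      ≤ Real.exp (-(c * (t - s))) * (ε * (t - s)) :=
        abs_exp_neg_integral_sub_le hst hf hg hcf hcg hfg
    _ = ε * (Real.exp (-(c * (t - s))) * (t - s)) := mul_left_comm ..
    _ ≤ ε * (2 / c * Real.exp (-c * (t - s) / 2)) :=
        mul_le_mul_of_nonneg_left (exp_neg_mul_mul_le hc (t - s)) hε
    _ = 2 / c * ε * Real.exp (-c * (t - s) / 2) := by ring

/-- Inequality (13), Case 1 of Lemma 2.7: if `a` is continuous with `a ≥ a_L > 0` and
`ω` is an `ε`-almost period of `a` (i.e. `|a(r+ω) - a(r)| ≤ ε` for all `r`), then for all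
`s ≤ t`, `|exp(-∫_s^t a(r+ω) dr) - exp(-∫_s^t a(r) dr)| ≤ (2/a_L) ε e^{-a_L(t-s)/2}`. -/
theorem exp_integral_shift_estimate
    (a : ℝ → ℝ) (ha : Continuous a) (aL : ℝ) (haL : 0 < aL)
    (hge : ∀ r : ℝ, aL ≤ a r) (ω ε : ℝ) (hε : 0 < ε)
    (hap : ∀ r : ℝ, |a (r + ω) - a r| ≤ ε) :
    ∀ s t : ℝ, s ≤ t →
      |Real.exp (-∫ r in s..t, a (r + ω)) - Real.exp (-∫ r in s..t, a r)|
        ≤ 2 / aL * ε * Real.exp (-aL * (t - s) / 2) := by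
  intro s t hst
  exact exp_integral_shift_estimate_general haL hst
    ((ha.comp (continuous_add_const ω)).intervalIntegrable s t) (ha.intervalIntegrable s t)
    (fun r _ ↦ hge (r + ω)) (fun r _ ↦ hge r) (fun r _ ↦ hap r)
end

section
/- Let (t_k)_{k ∈ ℤ} be a strictly increasing real sequence with t_{k+1} - t_k ≥ η for all k ∈ ℤ, where η > 0. Then for every α > 0 and every t ∈ ℝ, Σ_{k : t_k < t} e^{-α(t - t_k)} ((t - t_k)/η + 1) ≤ (2/(αη) + 1) · 1/(1 - e^{-αη/2}). -/
/-! Since `y * exp (-(α / 2) * y) ≤ 2 / α`, half of the exponential decay absorbs the linear weight: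
`exp (-α * y) * (y / η + 1) ≤ (2 / (α * η) + 1) * exp (-(α / 2) * y)` for `y ≥ 0`. What remains is a
sum of `exp (-(α / 2) * y)` over an `η`-separated set of nonnegative `y`; each interval
`[n * η, (n + 1) * η)` contains at most one of them, so a geometric series dominates the sum. -/

section Separated

variable {ι : Type*} {u : ι → ℝ} {β η : ℝ}

theorem pairwise_le_abs_sub_of_monotone {G : Type*} [AddCommGroup G] [LinearOrder G]
    [IsOrderedAddMonoid G] [LinearOrder ι] [Add ι] [One ι] [SuccAddOrder ι] {t : ι → G} {δ : G}
    (ht : Monotone t) (hgap : ∀ k, δ ≤ t (k + 1) - t k) :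
    Pairwise fun i j ↦ δ ≤ |t i - t j| := by
  have le_sub_of_lt : ∀ i j, i < j → δ ≤ t j - t i := fun i j hij ↦
    (hgap i).trans (sub_le_sub_right (ht (Order.add_one_le_of_lt hij)) _)
  intro i j hij
  rcases hij.lt_or_gt with h | h
  · rw [abs_sub_comm]
    exact (le_sub_of_lt i j h).trans (le_abs_self _)
  · exact (le_sub_of_lt j i h).trans (le_abs_self _)

theorem injective_natFloor_div_of_separated {K : Type*} [Field K] [LinearOrder K]
    [IsStrictOrderedRing K] [FloorRing K] {u : ι → K} {η : K} (hη : 0 < η) (hu : ∀ i, 0 ≤ u i)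
    (hsep : Pairwise fun i j ↦ η ≤ |u i - u j|) :
    Function.Injective fun i ↦ ⌊u i / η⌋₊ := by
  intro i j hij
  by_contra hne
  have floor_eq : ⌊u i / η⌋ = ⌊u j / η⌋ := by
    rw [← Int.natCast_floor_eq_floor (div_nonneg (hu i) hη.le),
      ← Int.natCast_floor_eq_floor (div_nonneg (hu j) hη.le)]
    exact congrArg Nat.cast hij
  have abs_lt : |u i - u j| < η := by
    have := Int.abs_sub_lt_one_of_floor_eq_floor floor_eq
    rwa [← sub_div, abs_div, abs_of_pos hη, div_lt_one hη] at this
  exact (hsep hne).not_gt abs_lt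

theorem exp_neg_mul_le_pow_natFloor_div (hβ : 0 ≤ β) (hη : 0 < η) {y : ℝ} (hy : 0 ≤ y) :
    Real.exp (-β * y) ≤ Real.exp (-β * η) ^ ⌊y / η⌋₊ := by
  have floor_mul_le : ⌊y / η⌋₊ * η ≤ y :=
    (le_div_iff₀ hη).1 (Nat.floor_le (div_nonneg hy hη.le))
  rw [← Real.exp_nat_mul, Real.exp_le_exp]
  linarith [mul_le_mul_of_nonneg_left floor_mul_le hβ]

theorem exp_neg_mul_lt_one (hβ : 0 < β) (hη : 0 < η) : Real.exp (-β * η) < 1 := by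
  simpa using mul_pos hβ hη

theorem summable_exp_neg_mul_of_separated (hβ : 0 < β) (hη : 0 < η) (hu : ∀ i, 0 ≤ u i)
    (hsep : Pairwise fun i j ↦ η ≤ |u i - u j|) :
    Summable fun i ↦ Real.exp (-β * u i) :=
  .of_nonneg_of_le (fun _ ↦ Real.exp_nonneg _)
    (fun i ↦ exp_neg_mul_le_pow_natFloor_div hβ.le hη (hu i))
    ((summable_geometric_of_lt_one (Real.exp_nonneg _) (exp_neg_mul_lt_one hβ hη)).comp_injective
      (injective_natFloor_div_of_separated hη hu hsep))

theorem tsum_exp_neg_mul_le_of_separated (hβ : 0 < β) (hη : 0 < η) (hu : ∀ i, 0 ≤ u i)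
    (hsep : Pairwise fun i j ↦ η ≤ |u i - u j|) :
    ∑' i, Real.exp (-β * u i) ≤ (1 - Real.exp (-β * η))⁻¹ := by
  have lt_one := exp_neg_mul_lt_one hβ hη
  calc ∑' i, Real.exp (-β * u i)
      ≤ ∑' n : ℕ, Real.exp (-β * η) ^ n :=
        (summable_exp_neg_mul_of_separated hβ hη hu hsep).tsum_le_tsum_of_inj _
          (injective_natFloor_div_of_separated hη hu hsep)
          (fun _ _ ↦ pow_nonneg (Real.exp_nonneg _) _)
          (fun i ↦ exp_neg_mul_le_pow_natFloor_div hβ.le hη (hu i))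
          (summable_geometric_of_lt_one (Real.exp_nonneg _) lt_one)
    _ = (1 - Real.exp (-β * η))⁻¹ := tsum_geometric_of_lt_one (Real.exp_nonneg _) lt_one

end Separated

theorem mul_exp_neg_mul_le_inv {β : ℝ} (hβ : 0 < β) (y : ℝ) : y * Real.exp (-β * y) ≤ β⁻¹ := by
  rw [neg_mul, Real.exp_neg, ← div_eq_mul_inv, div_le_iff₀ (Real.exp_pos _),
    ← div_eq_inv_mul, le_div_iff₀ hβ]
  linarith [Real.add_one_le_exp (β * y)]

theorem exp_neg_mul_mul_div_add_one_le {α η y : ℝ} (hα : 0 < α) (hη : 0 < η) (hy : 0 ≤ y) :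
    Real.exp (-α * y) * (y / η + 1) ≤ (2 / (α * η) + 1) * Real.exp (-(α / 2) * y) := by
  have linear_term : y * Real.exp (-(α / 2) * y) / η ≤ 2 / (α * η) := by
    rw [← div_div, ← inv_div α 2]
    gcongr
    exact mul_exp_neg_mul_le_inv (half_pos hα) y
  have constant_term : Real.exp (-(α / 2) * y) ≤ 1 :=
    Real.exp_le_one_iff.2 (mul_nonpos_of_nonpos_of_nonneg (by linarith) hy)
  calc Real.exp (-α * y) * (y / η + 1)
      = (y * Real.exp (-(α / 2) * y) / η + Real.exp (-(α / 2) * y)) *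
          Real.exp (-(α / 2) * y) := by
        rw [show -α * y = -(α / 2) * y + -(α / 2) * y by ring, Real.exp_add]
        ring
    _ ≤ (2 / (α * η) + 1) * Real.exp (-(α / 2) * y) := by gcongr

theorem weighted_exp_sum_over_impulses_le_general {ι : Type*} {t : ι → ℝ} {η α x : ℝ}
    (hη : 0 < η) (hα : 0 < α) (hx : ∀ i, t i ≤ x)
    (hsep : Pairwise fun i j ↦ η ≤ |t i - t j|) :
    (Summable fun i ↦ Real.exp (-α * (x - t i)) * ((x - t i) / η + 1)) ∧
      ∑' i, Real.exp (-α * (x - t i)) * ((x - t i) / η + 1)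
        ≤ (2 / (α * η) + 1) * (1 / (1 - Real.exp (-α * η / 2))) := by
  have hu : ∀ i, 0 ≤ x - t i := fun i ↦ sub_nonneg.2 (hx i)
  have hsep' : Pairwise fun i j ↦ η ≤ |(x - t i) - (x - t j)| := fun i j hij ↦ by
    simpa only [sub_sub_sub_cancel_left] using hsep hij.symm
  have term_le := fun i ↦ exp_neg_mul_mul_div_add_one_le hα hη (hu i)
  have summable_bound :=
    (summable_exp_neg_mul_of_separated (half_pos hα) hη hu hsep').mul_left (2 / (α * η) + 1)
  have summable_terms : Summable fun i ↦ Real.exp (-α * (x - t i)) * ((x - t i) / η + 1) :=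
    .of_nonneg_of_le
      (fun i ↦ mul_nonneg (Real.exp_nonneg _) (add_nonneg (div_nonneg (hu i) hη.le) zero_le_one))
      term_le summable_bound
  refine ⟨summable_terms, ?_⟩
  calc ∑' i, Real.exp (-α * (x - t i)) * ((x - t i) / η + 1)
      ≤ ∑' i, (2 / (α * η) + 1) * Real.exp (-(α / 2) * (x - t i)) :=
        summable_terms.tsum_le_tsum term_le summable_bound
    _ = (2 / (α * η) + 1) * ∑' i, Real.exp (-(α / 2) * (x - t i)) := tsum_mul_left
    _ ≤ (2 / (α * η) + 1) * (1 - Real.exp (-(α / 2) * η))⁻¹ := by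
        gcongr
        exact tsum_exp_neg_mul_le_of_separated (half_pos hα) hη hu hsep'
    _ = (2 / (α * η) + 1) * (1 / (1 - Real.exp (-α * η / 2))) := by
        rw [one_div, show -(α / 2) * η = -α * η / 2 by ring]

/-- Inequality (49) in the proof of Theorem 3.1: if the impulse points `t_k` (k ∈ ℤ) are
strictly increasing with gaps at least `η > 0`, then for every `α > 0` and `t ∈ ℝ`,
`Σ_{t_k < t} e^{-α(t - t_k)} ((t - t_k)/η + 1) ≤ (2/(αη) + 1) / (1 - e^{-αη/2})`. -/
theorem weighted_exp_sum_over_impulses_le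
    (t : ℤ → ℝ) (ht : StrictMono t) (η : ℝ) (hη : 0 < η)
    (hgap : ∀ k : ℤ, η ≤ t (k + 1) - t k) (α : ℝ) (hα : 0 < α) (x : ℝ) :
    ∑' k : {k : ℤ // t k < x}, Real.exp (-α * (x - t k)) * ((x - t k) / η + 1)
      ≤ (2 / (α * η) + 1) * (1 / (1 - Real.exp (-α * η / 2))) :=
  (weighted_exp_sum_over_impulses_le_general hη hα (fun k ↦ k.2.le)
    ((pairwise_le_abs_sub_of_monotone ht.monotone hgap).comp_of_injective
      Subtype.val_injective)).2
end
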